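/- arXiv:1610.05242 — 3 statements merged into one kernel-verified Lean document; each statement's English description precedes it below -/
import Mathlib

section
/- Let F be a field, V a finite-dimensional F-vector space, F'/F a field extension, and W ⊆ V ⊗_F F' a one-dimensional subspace whose conjugates under Aut(F'/F) span V ⊗_F F'. Then the stabilizer K = {φ ∈ End_F(V) : (φ ⊗ 1)(W) ⊆ W} is a commutative subring of End_F(V) that is an integral domain (in fact a field). -/
/-!
Since `W` is a line, every `φ` in the stabilizer acts on `W` through a scalar of `F'`, so sending
`φ` to this scalar is multiplicative and additive with values in a field. It is also injective:
`φ ⊗ 1` commutes with the action of `Aut(F'/F)`, so if it kills `W` it kills every conjugate of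
`W`, hence (these span) all of `F' ⊗ V`, and then `φ = 0` because `V` embeds in `F' ⊗ V`
(`eq_zero_of_baseChange_eq_zero_on`). A ring embedding into a field is a commutative domain.
-/

open TensorProduct

/-- An endomorphism of `V` whose base change kills `W` is zero, once the conjugates of `W` span:
this is the injectivity of the action of the stabilizer on `W`. -/
theorem eq_zero_of_baseChange_eq_zero_on
    {F F' : Type*} [Field F] [Field F'] [Algebra F F']
    {V : Type*} [AddCommGroup V] [Module F V]
    {W : Submodule F' (F' ⊗[F] V)}
    (hspan : Submodule.span F'
      (⋃ σ : F' ≃ₐ[F] F',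
        (LinearMap.rTensor V σ.toLinearMap) '' (W : Set (F' ⊗[F] V))) = ⊤)
    {φ : Module.End F V} (h : ∀ x ∈ W, LinearMap.baseChange F' φ x = 0) : φ = 0 := by
  have hker : (⊤ : Submodule F' (F' ⊗[F] V)) ≤ LinearMap.ker (LinearMap.baseChange F' φ) := by
    rw [← hspan, Submodule.span_le]
    refine Set.iUnion_subset fun σ => ?_
    rintro _ ⟨x, hx, rfl⟩
    -- `φ ⊗ 1` commutes with the conjugation by `σ`, as they act on different factors.
    have hcomm : LinearMap.lTensor F' φ (LinearMap.rTensor V σ.toLinearMap x) =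
        LinearMap.rTensor V σ.toLinearMap (LinearMap.lTensor F' φ x) := by
      rw [← LinearMap.comp_apply, ← LinearMap.comp_apply, LinearMap.lTensor_comp_rTensor,
        LinearMap.rTensor_comp_lTensor]
    have hx0 : LinearMap.lTensor F' φ x = 0 := h x hx
    change LinearMap.lTensor F' φ (LinearMap.rTensor V σ.toLinearMap x) = 0
    rw [hcomm, hx0, map_zero]
  ext v
  apply Module.FaithfullyFlat.tensorProduct_mk_injective (A := F) (B := F') V
  have := hker (x := (1 : F') ⊗ₜ[F] v) trivial
  simpa using this

/-- A line is spanned by a nonzero vector. The ambient module is kept abstract so that its additive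
structure is the one coming from `AddCommGroup`, as the dimension theory of Mathlib requires. -/
theorem exists_generator_of_finrank_eq_one
    {K M : Type*} [Field K] [AddCommGroup M] [Module K M] (W : Submodule K M)
    (hW : Module.finrank K W = 1) :
    ∃ w ∈ W, w ≠ 0 ∧ ∀ x ∈ W, ∃ c : K, c • w = x := by
  obtain ⟨w, hw0, hw⟩ := finrank_eq_one_iff'.mp hW
  refine ⟨w, w.2, fun h => hw0 (Subtype.ext h), fun x hx => ?_⟩
  obtain ⟨c, hc⟩ := hw ⟨x, hx⟩
  exact ⟨c, congrArg Subtype.val hc⟩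

/-- If `W ⊆ F' ⊗[F] V` is a line whose conjugates under `Aut(F'/F)` span
`F' ⊗ V`, then the stabilizer of `W` in `End_F(V)` is a commutative subring which is an
integral domain. -/
theorem stabilizer_isDomain
    (F F' : Type*) [Field F] [Field F'] [Algebra F F']
    (V : Type*) [AddCommGroup V] [Module F V] [FiniteDimensional F V]
    (W : Submodule F' (F' ⊗[F] V))
    (hW : Module.finrank F' ↥W = 1)
    (hspan : Submodule.span F'
      (⋃ σ : F' ≃ₐ[F] F',
        (LinearMap.rTensor V σ.toLinearMap) '' (W : Set (F' ⊗[F] V))) = ⊤) :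
    ∃ K : Subring (Module.End F V),
      ((K : Set (Module.End F V)) =
        {φ : Module.End F V | ∀ x ∈ W, LinearMap.baseChange F' φ x ∈ W}) ∧
      (∀ a ∈ K, ∀ b ∈ K, a * b = b * a) ∧
      (∀ a ∈ K, ∀ b ∈ K, a * b = 0 → a = 0 ∨ b = 0) := by
  obtain ⟨w, hwW, hw0, hw⟩ : ∃ w ∈ W, w ≠ 0 ∧ ∀ x ∈ W, ∃ c : F', c • w = x :=
    exists_generator_of_finrank_eq_one W hW
  -- Each element of the stabilizer acts on the line `W` by a scalar.
  have hscal : ∀ φ : Module.End F V, (∀ x ∈ W, LinearMap.baseChange F' φ x ∈ W) →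
      ∃ c : F', ∀ x ∈ W, LinearMap.baseChange F' φ x = c • x := by
    intro φ hφ
    obtain ⟨c, hc⟩ := hw _ (hφ w hwW)
    refine ⟨c, fun x hx => ?_⟩
    obtain ⟨d, hd⟩ := hw x hx
    rw [← hd, map_smul, ← hc, smul_comm]
  refine ⟨{ carrier := {φ | ∀ x ∈ W, LinearMap.baseChange F' φ x ∈ W}
            mul_mem' := ?_, one_mem' := ?_, add_mem' := ?_, zero_mem' := ?_, neg_mem' := ?_ },
    rfl, ?_, ?_⟩
  · intro a b ha hb x hx
    rw [LinearMap.baseChange_mul]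
    exact ha _ (hb x hx)
  · intro x hx
    rw [LinearMap.baseChange_one]
    exact hx
  · intro a b ha hb x hx
    rw [LinearMap.baseChange_add]
    exact W.add_mem (ha x hx) (hb x hx)
  · intro x _
    rw [LinearMap.baseChange_zero]
    exact W.zero_mem
  · intro a ha x hx
    rw [LinearMap.baseChange_neg]
    exact W.neg_mem (ha x hx)
  · intro a ha b hb
    obtain ⟨c, hc⟩ := hscal a ha
    obtain ⟨d, hd⟩ := hscal b hb
    rw [← sub_eq_zero]
    refine eq_zero_of_baseChange_eq_zero_on hspan fun x hx => ?_
    rw [LinearMap.baseChange_sub, LinearMap.baseChange_mul, LinearMap.baseChange_mul,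
      LinearMap.sub_apply, Module.End.mul_apply, Module.End.mul_apply, hd x hx, hc x hx,
      map_smul, map_smul, hc x hx, hd x hx, smul_comm, sub_self]
  · intro a ha b hb hab
    obtain ⟨c, hc⟩ := hscal a ha
    obtain ⟨d, hd⟩ := hscal b hb
    have h0 : (d * c) • w = 0 := by
      have h1 : LinearMap.baseChange F' (a * b) w = 0 := by
        rw [hab, LinearMap.baseChange_zero, LinearMap.zero_apply]
      rwa [LinearMap.baseChange_mul, Module.End.mul_apply, hd w hwW, map_smul, hc w hwW,
        smul_smul] at h1
    rcases mul_eq_zero.mp ((smul_eq_zero.mp h0).resolve_right hw0) with h | h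
    · right
      exact eq_zero_of_baseChange_eq_zero_on hspan fun x hx => by rw [hd x hx, h, zero_smul]
    · left
      exact eq_zero_of_baseChange_eq_zero_on hspan fun x hx => by rw [hc x hx, h, zero_smul]
end

section
/- Let F be a field of characteristic zero, V an n-dimensional F-vector space, F'/F a field extension, and W ⊆ V ⊗_F F' a line whose Aut(F'/F)-conjugates span V ⊗_F F'. If the stabilizer K of W in End_F(V) satisfies [K : F] = n, then the field of definition F(W) of W satisfies [F(W) : F] = n and the eigenvalue embedding K → F(W) is an isomorphism. -/
/-!
For a functional `f` on `V`, extend scalars to an `F'`-linear functional `evalDual f` on `F' ⊗ V`.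
Choose a generator `w` of `W` and a functional `f₀` with `evalDual f₀ w = 1`. The eigenvalue of
`φ ∈ K` on `W` is then `evalDual f₀ (φ w) = evalDual (f₀ ∘ φ) w`, so it lies in the `F`-span `U` of
the coordinates of `w`, and `dim U ≤ n`. An element of `K` killing `w` kills all conjugates of `w`,
hence is zero, so the eigenvalue map is injective. Its image `E` has dimension `n`, which forces
`E = U`. Hence `E` is a field containing all coordinates of `w`, so `W` is defined over `E` and
`M ≤ E`. Conversely an eigenvalue is a quotient of coordinates of vectors defined over `M`,
so `E ≤ M`.
-/

open TensorProduct

/-- `W` is defined over the intermediate field `M` of `F'/F`: it is spanned by a vector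
coming from `M ⊗[F] V`. -/
def IsDefinedOver (F F' : Type*) [Field F] [Field F'] [Algebra F F']
    (V : Type*) [AddCommGroup V] [Module F V]
    (M : IntermediateField F F') (W : Submodule F' (F' ⊗[F] V)) : Prop :=
  ∃ w : ↥M ⊗[F] V,
    W = Submodule.span F' {LinearMap.rTensor V M.val.toLinearMap w}

namespace StabilizerDegree

variable {F F' V : Type*} [Field F] [Field F'] [Algebra F F'] [AddCommGroup V] [Module F V]

/-- The `F'`-linear extension to `F' ⊗ V` of a functional `f` on `V`. -/
noncomputable def evalDual (F' : Type*) [Field F'] [Algebra F F'] (f : Module.Dual F V) :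
    F' ⊗[F] V →ₗ[F'] F' :=
  (TensorProduct.AlgebraTensorModule.rid F F' F').toLinearMap ∘ₗ LinearMap.baseChange F' f

@[simp] lemma evalDual_tmul (f : Module.Dual F V) (a : F') (v : V) :
    evalDual F' f (a ⊗ₜ[F] v) = f v • a := by
  simp [evalDual]

/-- Evaluation of functionals on a fixed vector of `F' ⊗ V`; its range is the `F`-span of the
coordinates of that vector. -/
noncomputable def coordMap (x : F' ⊗[F] V) : Module.Dual F V →ₗ[F] F' where
  toFun f := evalDual F' f x
  map_add' f g := by simp [evalDual, LinearMap.baseChange_add]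
  map_smul' c f := by
    simp only [evalDual, LinearMap.baseChange_smul, LinearMap.comp_apply, LinearMap.smul_apply]
    exact LinearMap.map_smul_of_tower _ c _

lemma evalDual_comp (f : Module.Dual F V) (φ : Module.End F V) (x : F' ⊗[F] V) :
    evalDual F' f (φ.baseChange F' x) = evalDual F' (f ∘ₗ φ) x := by
  simp [evalDual, LinearMap.baseChange_comp]

lemma sum_coord {ι : Type*} [Fintype ι] (b : Module.Basis ι F V) (x : F' ⊗[F] V) :
    ∑ i, evalDual F' (b.coord i) x ⊗ₜ[F] b i = x := by
  induction x using TensorProduct.induction_on with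
  | zero => simp
  | tmul a v =>
    simp only [evalDual_tmul, TensorProduct.smul_tmul, ← TensorProduct.tmul_sum]
    simp [b.sum_repr]
  | add x y hx hy => simp only [map_add, TensorProduct.add_tmul, Finset.sum_add_distrib, hx, hy]

lemma exists_evalDual_ne_zero [FiniteDimensional F V] {x : F' ⊗[F] V} (hx : x ≠ 0) :
    ∃ f : Module.Dual F V, evalDual F' f x ≠ 0 := by
  by_contra! h
  apply hx
  rw [← sum_coord (Module.finBasis F V) x]
  simp [h]

lemma eq_zero_of_baseChange [FiniteDimensional F V] {φ : Module.End F V}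
    (h : ∀ x, φ.baseChange F' x = 0) : φ = 0 := by
  ext v
  rw [LinearMap.zero_apply, ← Module.forall_dual_apply_eq_zero_iff F]
  intro f
  have h2 := congrArg (evalDual F' f) (h (1 ⊗ₜ v))
  simpa [Algebra.smul_def] using h2

lemma baseChange_conj (φ : Module.End F V) (σ : F' ≃ₐ[F] F') (x : F' ⊗[F] V) :
    φ.baseChange F' (LinearMap.rTensor V σ.toLinearMap x) =
      LinearMap.rTensor V σ.toLinearMap (φ.baseChange F' x) := by
  induction x using TensorProduct.induction_on with
  | zero => simp
  | tmul a v => simp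
  | add x y hx hy => simp only [map_add, hx, hy]

lemma evalDual_mem (M : IntermediateField F F') (f : Module.Dual F V) (x : ↥M ⊗[F] V) :
    evalDual F' f (LinearMap.rTensor V M.val.toLinearMap x) ∈ M := by
  induction x using TensorProduct.induction_on with
  | zero => simp
  | tmul a v => simpa using M.smul_mem a.2
  | add x y hx hy => simpa only [map_add] using M.add_mem hx hy

/-- Since the conjugates of `W` span, an endomorphism killing `W` is zero. -/
lemma eq_zero_of_kills [FiniteDimensional F V] {W : Submodule F' (F' ⊗[F] V)}
    (hspan : Submodule.span F'
      (⋃ σ : F' ≃ₐ[F] F',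
        (LinearMap.rTensor V σ.toLinearMap) '' (W : Set (F' ⊗[F] V))) = ⊤)
    {φ : Module.End F V} (h : ∀ x ∈ W, φ.baseChange F' x = 0) : φ = 0 := by
  apply eq_zero_of_baseChange (F' := F')
  have hle : (⊤ : Submodule F' (F' ⊗[F] V)) ≤ LinearMap.ker (φ.baseChange F') := by
    rw [← hspan, Submodule.span_le]
    intro y hy
    obtain ⟨σ, x, hx, rfl⟩ := Set.mem_iUnion.1 hy
    simp [baseChange_conj, h x hx]
  exact fun x => hle trivial

end StabilizerDegree

open StabilizerDegree in
/-- `F` of characteristic zero, `V` of dimension `n`, `W ⊆ F' ⊗ V` a line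
whose `Aut(F'/F)`-conjugates span.  If the stabilizer `K` of `W` in `End_F(V)` has
`[K : F] = n`, then the field of definition `F(W)` (the minimal intermediate field `M`
over which `W` is defined) satisfies `[F(W) : F] = n`, and the eigenvalue embedding
`K → F(W)` is an isomorphism: every `φ ∈ K` acts on `W` by a scalar lying in `M`, the
eigenvalue map is injective, and every element of `M` arises as an eigenvalue. -/
theorem fieldOfDefinition_degree_of_stabilizer_degree
    (F F' : Type*) [Field F] [CharZero F] [Field F'] [Algebra F F']
    (V : Type*) [AddCommGroup V] [Module F V] [FiniteDimensional F V]
    (n : ℕ) (hV : Module.finrank F V = n)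
    (W : Submodule F' (F' ⊗[F] V))
    (hW : Module.finrank F' ↥W = 1)
    (hspan : Submodule.span F'
      (⋃ σ : F' ≃ₐ[F] F',
        (LinearMap.rTensor V σ.toLinearMap) '' (W : Set (F' ⊗[F] V))) = ⊤)
    (M : IntermediateField F F')
    (hdef : IsDefinedOver F F' V M W)
    (hmin : ∀ M' : IntermediateField F F', IsDefinedOver F F' V M' W → M ≤ M')
    (K : Subalgebra F (Module.End F V))
    (hK : (K : Set (Module.End F V)) =
      {φ : Module.End F V | ∀ x ∈ W, LinearMap.baseChange F' φ x ∈ W})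
    (hKn : Module.finrank F ↥K = n) :
    Module.finrank F ↥M = n ∧
    (∀ φ ∈ K, ∃ c : F', c ∈ M ∧ ∀ x ∈ W, LinearMap.baseChange F' φ x = c • x) ∧
    (∀ c : F', c ∈ M →
      ∃ φ ∈ K, ∀ x ∈ W, LinearMap.baseChange F' φ x = c • x) ∧
    (∀ φ ∈ K, ∀ ψ ∈ K, ∀ c : F',
      (∀ x ∈ W, LinearMap.baseChange F' φ x = c • x) →
      (∀ x ∈ W, LinearMap.baseChange F' ψ x = c • x) → φ = ψ) := by
  classical
  have hmem : ∀ φ, φ ∈ K ↔ ∀ x ∈ W, LinearMap.baseChange F' φ x ∈ W := fun φ => by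
    rw [← SetLike.mem_coe, hK]; rfl
  -- A generator `w` of `W` normalized so that some functional takes the value `1` on it.
  obtain ⟨w, f₀, hf₀, hWw⟩ : ∃ (w : F' ⊗[F] V) (f₀ : Module.Dual F V),
      evalDual F' f₀ w = 1 ∧ W = Submodule.span F' {w} := by
    obtain ⟨v, hv, hv0⟩ := Submodule.exists_mem_ne_zero_of_ne_bot (p := W) (by
      rintro rfl
      simp at hW)
    have hWv : W = Submodule.span F' {v} := by
      refine le_antisymm (fun x hx => ?_) (by simpa using hv)
      obtain ⟨c, hc⟩ := (finrank_eq_one_iff_of_nonzero' (⟨v, hv⟩ : W) (by simpa using hv0)).1 hW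
        ⟨x, hx⟩
      exact Submodule.mem_span_singleton.2 ⟨c, congrArg Subtype.val hc⟩
    obtain ⟨f, hf⟩ := exists_evalDual_ne_zero hv0
    refine ⟨(evalDual F' f v)⁻¹ • v, f, by simp [hf], ?_⟩
    rw [hWv, Submodule.span_singleton_smul_eq (IsUnit.mk0 _ (inv_ne_zero hf))]
  have hw : w ∈ W := hWw ▸ Submodule.mem_span_singleton_self w
  have hext : ∀ (φ : Module.End F V) (c : F'), φ.baseChange F' w = c • w →
      ∀ x ∈ W, φ.baseChange F' x = c • x := by
    intro φ c h x hx
    rw [hWw] at hx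
    obtain ⟨a, rfl⟩ := Submodule.mem_span_singleton.1 hx
    rw [map_smul, h, smul_comm]
  have heig : ∀ φ ∈ K, φ.baseChange F' w = evalDual F' f₀ (φ.baseChange F' w) • w := by
    intro φ hφ
    have h := (hmem φ).1 hφ w hw
    rw [hWw] at h
    obtain ⟨c, hc⟩ := Submodule.mem_span_singleton.1 h
    rw [← hc, map_smul, hf₀, smul_eq_mul, mul_one]
  -- The eigenvalue map.
  let lin : K →ₗ[F] F' :=
    { toFun := fun φ => evalDual F' f₀ ((φ : Module.End F V).baseChange F' w)
      map_add' := fun φ ψ => by simp [LinearMap.baseChange_add]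
      map_smul' := fun c φ => by
        rw [SetLike.val_smul, LinearMap.baseChange_smul, LinearMap.smul_apply]
        exact LinearMap.map_smul_of_tower _ c _ }
  have hlin : ∀ φ : K, (φ : Module.End F V).baseChange F' w = lin φ • w :=
    fun φ => heig φ φ.2
  let ev : K →ₐ[F] F' := AlgHom.ofLinearMap lin
    (by
      change evalDual F' f₀ (LinearMap.baseChange F' (1 : Module.End F V) w) = 1
      rw [LinearMap.baseChange_one]
      exact hf₀)
    (fun φ ψ => by
      change evalDual F' f₀ (LinearMap.baseChange F' ((φ : Module.End F V) * (ψ : Module.End F V)) w) = _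
      rw [LinearMap.baseChange_mul, Module.End.mul_apply, hlin ψ, map_smul, hlin φ, map_smul,
        map_smul, hf₀, smul_eq_mul, smul_eq_mul, mul_one, mul_comm])
  have hinj : Function.Injective lin := by
    rw [injective_iff_map_eq_zero]
    intro φ h
    apply Subtype.ext
    apply eq_zero_of_kills hspan
    intro x hx
    rw [hext φ 0 (by rw [hlin, h]) x hx, zero_smul]
  have hrank : Module.finrank F ev.range = n := by
    rw [← hKn]
    exact LinearMap.finrank_range_of_inj hinj
  have hle : LinearMap.range lin ≤ LinearMap.range (coordMap w) := by
    rintro _ ⟨φ, rfl⟩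
    exact ⟨f₀ ∘ₗ (φ : Module.End F V), (evalDual_comp _ _ _).symm⟩
  have heq : LinearMap.range lin = LinearMap.range (coordMap w) := by
    apply Submodule.eq_of_le_of_finrank_le hle
    calc _ ≤ Module.finrank F (Module.Dual F V) := LinearMap.finrank_range_le _
      _ = n := by rw [Subspace.dual_finrank_eq, hV]
      _ = _ := by rw [LinearMap.finrank_range_of_inj hinj, hKn]
  have : FiniteDimensional F ev.range :=
    inferInstanceAs (FiniteDimensional F (LinearMap.range lin))
  -- A finite-dimensional subalgebra of a field is a field.
  let E : IntermediateField F F' := ev.range.toIntermediateField' (by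
    exact isField_of_isIntegral_of_isField' (Field.toIsField F))
  have hE : ∀ c, c ∈ E ↔ ∃ φ, lin φ = c := fun c => Iff.rfl
  have hEdef : IsDefinedOver F F' V E W := by
    have hc : ∀ f : Module.Dual F V, evalDual F' f w ∈ E := fun f => by
      have h : coordMap w f ∈ LinearMap.range lin := heq ▸ ⟨f, rfl⟩
      exact h
    refine ⟨∑ i, (⟨_, hc ((Module.finBasis F V).coord i)⟩ : E) ⊗ₜ[F] Module.finBasis F V i, ?_⟩
    rw [hWw]
    apply congrArg (fun y => Submodule.span F' {y})
    rw [map_sum]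
    exact (sum_coord (Module.finBasis F V) w).symm
  have hEM : E ≤ M := by
    intro c hc
    obtain ⟨φ, rfl⟩ := (hE c).1 hc
    obtain ⟨w', hw'⟩ := hdef
    set y := LinearMap.rTensor V M.val.toLinearMap w' with hy
    have hy0 : y ≠ 0 := by
      intro h
      rw [hw', h, Submodule.span_zero_singleton, finrank_bot] at hW
      exact zero_ne_one hW
    obtain ⟨f, hf⟩ := exists_evalDual_ne_zero hy0
    have h := congrArg (evalDual F' f)
      (hext φ _ (hlin φ) y (hw' ▸ Submodule.mem_span_singleton_self y))
    rw [evalDual_comp, map_smul, smul_eq_mul] at h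
    rw [eq_div_of_mul_eq hf h.symm]
    exact M.div_mem (evalDual_mem M _ w') (evalDual_mem M _ w')
  have hME : M = E := le_antisymm (hmin E hEdef) hEM
  refine ⟨?_, ?_, ?_, ?_⟩
  · rw [hME]
    exact hrank
  · intro φ hφ
    exact ⟨lin ⟨φ, hφ⟩, hEM ((hE _).2 ⟨_, rfl⟩), hext φ _ (hlin ⟨φ, hφ⟩)⟩
  · intro c hc
    rw [hME] at hc
    obtain ⟨φ, rfl⟩ := (hE c).1 hc
    exact ⟨φ, φ.2, hext φ _ (hlin φ)⟩
  · intro φ _ ψ _ c h1 h2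
    rw [← sub_eq_zero]
    apply eq_zero_of_kills hspan
    intro x hx
    rw [LinearMap.baseChange_sub, LinearMap.sub_apply, h1 x hx, h2 x hx, sub_self]
end

section
/- Let F be a field of characteristic zero, V an n-dimensional F-vector space, F'/F a field extension, and W ⊆ V ⊗_F F' a line whose conjugates under Aut(F'/F) span V ⊗_F F'. Then the following are equivalent: (a) the stabilizer K of W in End_F(V) has [K : F] = n; (b) [F(W) : F] = n; (c) the eigenvalue embedding K → F(W) is an isomorphism. -/
/-!
Contracting a vector `w` spanning `W` with the `F`-linear forms on `V` gives an `F`-linear map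
`V* → F'`, `f ↦ ⟨f, w⟩` (`coeffMap`); let `L` be its range, the `F`-span of the coordinates
of `w`. Scale `w` so that one of its contractions is `1`, so that `1 ∈ L`.

* The conjugates of `W` span, so no nonzero `F`-rational form kills `w`: contraction is injective
  and `dim_F L = n` (`coeffMap_injective`).
* An endomorphism `φ` satisfies `φ w = c w` iff `⟨f ∘ φ, w⟩ = c ⟨f, w⟩` for all `f`. Hence the
  eigenvalue embeds `K` in `F'`, with image the multiplier ring `A = {c : c L ⊆ L}`
  (`exists_end_of_mul_mem`). As `1 ∈ L`, we have `A ⊆ L`.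
* `L ⊆ M`, by comparing `w` with an `M`-rational generator of `W` (`coeff_mem_of_isDefinedOver`),
  and every intermediate field containing `L` contains `M` (`isDefinedOver_of_coeff_mem`).

In the chain `A ⊆ L ⊆ M` we have `A = L ↔ L = M`: if `A = L`, then `L` is a finite-dimensional
subalgebra of a field, hence a field, and so contains `M`; if `L = M`, then `L` is closed under
multiplication by its own elements, so `L ⊆ A`. Counting dimensions, (a) says `A = L` and
(b) says `L = M`, while (c) says `A = M`, which squeezes `L` between them.
-/

open TensorProduct

section Contraction

variable {F F' V : Type*} [Field F] [Field F'] [Algebra F F'] [AddCommGroup V] [Module F V]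

/-- The `F'`-linear extension `F' ⊗ V → F'` of an `F`-linear form `f` on `V`,
`a ⊗ v ↦ f v • a`. -/
noncomputable def contract (F' : Type*) [Field F'] [Algebra F F'] (f : Module.Dual F V) :
    F' ⊗[F] V →ₗ[F'] F' :=
  Module.Dual.baseChange F' f

@[simp]
lemma contract_tmul (f : Module.Dual F V) (a : F') (v : V) :
    contract F' f (a ⊗ₜ[F] v) = f v • a := by
  simp [contract]

lemma contract_baseChange (f : Module.Dual F V) (φ : Module.End F V) (x : F' ⊗[F] V) :
    contract F' f (φ.baseChange F' x) = contract F' (f ∘ₗ φ) x := by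
  induction x with
  | zero => simp
  | tmul a v => simp
  | add x y hx hy => simp only [map_add, hx, hy]

/-- Contraction with an `F`-rational form commutes with coefficient maps; `E` is used below as
an intermediate field of `F'/F` or as `F'` itself. -/
lemma contract_rTensor {E : Type*} [Field E] [Algebra F E] (σ : E →ₐ[F] F')
    (f : Module.Dual F V) (x : E ⊗[F] V) :
    contract F' f (LinearMap.rTensor V σ.toLinearMap x) = σ (contract E f x) := by
  induction x with
  | zero => simp
  | tmul a v => simp
  | add x y hx hy => simp only [map_add, hx, hy]

/-- The coefficients of `x` in an `F`-rational basis are its contractions with the dual basis. -/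
lemma sum_contract_coord {ι : Type*} [Fintype ι] (b : Module.Basis ι F V) (x : F' ⊗[F] V) :
    ∑ i, contract F' (b.coord i) x ⊗ₜ[F] b i = x := by
  induction x with
  | zero => simp
  | tmul a v =>
    simp only [contract_tmul, Module.Basis.coord_apply, TensorProduct.smul_tmul]
    rw [← TensorProduct.tmul_sum, b.sum_repr]
  | add x y hx hy =>
    simp only [map_add, TensorProduct.add_tmul, Finset.sum_add_distrib, hx, hy]

lemma contract_ext [FiniteDimensional F V] {x y : F' ⊗[F] V}
    (h : ∀ f : Module.Dual F V, contract F' f x = contract F' f y) : x = y := by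
  rw [← sum_contract_coord (Module.finBasis F V) x, ← sum_contract_coord (Module.finBasis F V) y]
  simp only [h]

/-- Contraction of `F`-linear forms with a fixed vector `w`. Its range is the `F`-span of the
coordinates of `w` in any `F`-rational basis. -/
noncomputable def coeffMap (w : F' ⊗[F] V) : Module.Dual F V →ₗ[F] F' where
  toFun f := contract F' f w
  map_add' f g := by simp [contract]
  map_smul' c f := by simp [contract]

lemma coeffMap_apply (w : F' ⊗[F] V) (f : Module.Dual F V) :
    coeffMap w f = contract F' f w := rfl

/-- A form killing `w` kills every conjugate of `w`, being `F`-rational. -/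
lemma coeffMap_injective (w : F' ⊗[F] V)
    (hspan : Submodule.span F' (⋃ σ : F' ≃ₐ[F] F', (LinearMap.rTensor V σ.toLinearMap) ''
      (Submodule.span F' {w} : Set (F' ⊗[F] V))) = ⊤) :
    Function.Injective (coeffMap (F := F) w) := by
  rw [injective_iff_map_eq_zero]
  intro f hf
  rw [coeffMap_apply] at hf
  have hker : (⊤ : Submodule F' (F' ⊗[F] V)) ≤ LinearMap.ker (contract F' f) := by
    rw [← hspan, Submodule.span_le]
    rintro _ hx
    obtain ⟨σ, y, hy, rfl⟩ := Set.mem_iUnion.1 hx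
    obtain ⟨t, rfl⟩ := Submodule.mem_span_singleton.1 hy
    have := contract_rTensor (σ : F' →ₐ[F] F') f (t • w)
    rw [map_smul (contract F' f) t w, hf, smul_zero, map_zero] at this
    exact this
  ext v
  have := hker (Submodule.mem_top (x := (1 : F') ⊗ₜ[F] v))
  rw [LinearMap.mem_ker, contract_tmul] at this
  simpa using this

/-- Multiplication by `c` on `L = range (coeffMap w)` lifts to `V*`, and its transpose is an
endomorphism of `V` having `w` as eigenvector. -/
lemma exists_end_of_mul_mem [FiniteDimensional F V] (w : F' ⊗[F] V) (c : F')
    (hc : ∀ a ∈ LinearMap.range (coeffMap (F := F) w),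
      c * a ∈ LinearMap.range (coeffMap (F := F) w)) :
    ∃ φ : Module.End F V, φ.baseChange F' w = c • w := by
  let b := Module.finBasis F V
  have h : ∀ i, ∃ g : Module.Dual F V, contract F' g w = c * contract F' (b.coord i) w :=
    fun i => hc _ ⟨b.coord i, rfl⟩
  choose g hg using h
  let φ : Module.End F V := ∑ i, (g i).smulRight (b i)
  have hφ : ∀ i, b.coord i ∘ₗ φ = g i := by
    intro i
    ext v
    simp [φ, Finsupp.single_apply]
  refine ⟨φ, ?_⟩
  rw [← sum_contract_coord b (φ.baseChange F' w), ← sum_contract_coord b (c • w)]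
  refine Finset.sum_congr rfl fun i _ => ?_
  rw [contract_baseChange, hφ, hg, map_smul, smul_eq_mul]

lemma isDefinedOver_of_coeff_mem [FiniteDimensional F V] (w : F' ⊗[F] V)
    (M : IntermediateField F F') (h : ∀ f : Module.Dual F V, contract F' f w ∈ M) :
    IsDefinedOver F F' V M (Submodule.span F' {w}) := by
  let b := Module.finBasis F V
  refine ⟨∑ i, (⟨contract F' (b.coord i) w, h _⟩ : M) ⊗ₜ[F] b i, ?_⟩
  have : LinearMap.rTensor V M.val.toLinearMap
      (∑ i, (⟨contract F' (b.coord i) w, h _⟩ : M) ⊗ₜ[F] b i) = w := by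
    rw [map_sum]
    exact sum_contract_coord b w
  rw [this]

/-- If some contraction of `w` is `1`, then `w` is an `M`-multiple of any `M`-rational generator
of its line. -/
lemma coeff_mem_of_isDefinedOver (w : F' ⊗[F] V) (M : IntermediateField F F')
    (hdef : IsDefinedOver F F' V M (Submodule.span F' {w}))
    (f₀ : Module.Dual F V) (h₀ : contract F' f₀ w = 1) (f : Module.Dual F V) :
    contract F' f w ∈ M := by
  obtain ⟨u, hu⟩ := hdef
  have hw := Submodule.mem_span_singleton_self (R := F') w
  rw [hu] at hw
  obtain ⟨t, rfl⟩ := Submodule.mem_span_singleton.1 hw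
  have hM : ∀ g : Module.Dual F V, contract F' g (LinearMap.rTensor V M.val.toLinearMap u) ∈ M := by
    intro g
    rw [contract_rTensor]
    exact (contract M g u).2
  rw [map_smul, smul_eq_mul] at h₀ ⊢
  have ht : t ∈ M := by
    rw [eq_inv_of_mul_eq_one_left h₀]
    exact M.inv_mem (hM f₀)
  exact M.mul_mem ht (hM f)

/-- A line is spanned by a vector one of whose contractions is `1`. -/
lemma exists_normalized_generator [FiniteDimensional F V] (W : Submodule F' (F' ⊗[F] V))
    (hW : Module.finrank F' W = 1) :
    ∃ (w : F' ⊗[F] V) (f₀ : Module.Dual F V),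
      W = Submodule.span F' {w} ∧ contract F' f₀ w = 1 := by
  have : Module.Free F' W := Module.Free.of_divisionRing F' W
  obtain ⟨u, hu0, hu⟩ := (finrank_eq_one_iff' (K := F') (V := W)).1 hW
  have hex : ∃ f : Module.Dual F V, contract F' f (u : F' ⊗[F] V) ≠ 0 := by
    by_contra! h
    exact hu0 (Subtype.ext (contract_ext fun f => by rw [h f, ZeroMemClass.coe_zero, map_zero]))
  obtain ⟨f₀, h₀⟩ := hex
  refine ⟨(contract F' f₀ (u : F' ⊗[F] V))⁻¹ • (u : F' ⊗[F] V), f₀, ?_, ?_⟩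
  · rw [Submodule.span_singleton_smul_eq (IsUnit.mk0 _ (inv_ne_zero h₀))]
    refine le_antisymm (fun x hx => ?_) ((Submodule.span_singleton_le_iff_mem _ _).2 u.2)
    obtain ⟨c, hc⟩ := hu ⟨x, hx⟩
    exact Submodule.mem_span_singleton.2 ⟨c, congrArg Subtype.val hc⟩
  · rw [map_smul, smul_eq_mul, inv_mul_cancel₀ h₀]

/-- A finite-dimensional `F`-subspace of `F'` that contains `1` and is closed under
multiplication is an intermediate field. -/
lemma exists_intermediateField_eq (L : Submodule F F') [FiniteDimensional F L] (h1 : (1 : F') ∈ L)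
    (hmul : ∀ x ∈ L, ∀ y ∈ L, x * y ∈ L) :
    ∃ E : IntermediateField F F', ∀ x, x ∈ E ↔ x ∈ L := by
  let S : Subalgebra F F' := L.toSubalgebra h1 fun x y hx hy => hmul x hx y hy
  have : FiniteDimensional F S := inferInstanceAs (FiniteDimensional F L)
  refine ⟨S.toIntermediateField fun x hx => ?_, fun x => Iff.rfl⟩
  have halg : IsAlgebraic F ((⟨x, hx⟩ : S) : F') :=
    (Algebra.IsAlgebraic.isAlgebraic (R := F) (⟨x, hx⟩ : S)).algebraMap
  exact S.inv_mem_of_algebraic halg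

end Contraction

/-- Lemma 3.1 of the paper, in full: `F` of characteristic zero, `V`
`n`-dimensional, `W ⊆ F' ⊗ V` a line whose `Aut(F'/F)`-conjugates span; `K` the stabilizer
of `W` in `End_F(V)` and `M = F(W)` the field of definition of `W`.  The following are
equivalent: (a) `[K : F] = n`; (b) `[F(W) : F] = n`; (c) the eigenvalue embedding
`K → F(W)` is an isomorphism (every `φ ∈ K` acts on `W` by a scalar in `M`, this
assignment is injective, and every element of `M` occurs). -/
theorem stabilizer_tfae
    (F F' : Type*) [Field F] [CharZero F] [Field F'] [Algebra F F']
    (V : Type*) [AddCommGroup V] [Module F V] [FiniteDimensional F V]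
    (n : ℕ) (hV : Module.finrank F V = n)
    (W : Submodule F' (F' ⊗[F] V))
    (hW : Module.finrank F' ↥W = 1)
    (hspan : Submodule.span F'
      (⋃ σ : F' ≃ₐ[F] F',
        (LinearMap.rTensor V σ.toLinearMap) '' (W : Set (F' ⊗[F] V))) = ⊤)
    (M : IntermediateField F F')
    (hdef : IsDefinedOver F F' V M W)
    (hmin : ∀ M' : IntermediateField F F', IsDefinedOver F F' V M' W → M ≤ M')
    (K : Subalgebra F (Module.End F V))
    (hK : (K : Set (Module.End F V)) =
      {φ : Module.End F V | ∀ x ∈ W, LinearMap.baseChange F' φ x ∈ W}) :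
    (Module.finrank F ↥K = n ↔ Module.finrank F ↥M = n) ∧
    (Module.finrank F ↥K = n ↔
      ((∀ φ ∈ K, ∃ c : F', c ∈ M ∧ ∀ x ∈ W, LinearMap.baseChange F' φ x = c • x) ∧
       (∀ c : F', c ∈ M →
         ∃ φ ∈ K, ∀ x ∈ W, LinearMap.baseChange F' φ x = c • x) ∧
       (∀ φ ∈ K, ∀ ψ ∈ K, ∀ c : F',
         (∀ x ∈ W, LinearMap.baseChange F' φ x = c • x) →
         (∀ x ∈ W, LinearMap.baseChange F' ψ x = c • x) → φ = ψ))) := by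
  obtain ⟨w, f₀, rfl, h₀⟩ := exists_normalized_generator W hW
  have hK' : ∀ φ : Module.End F V,
      φ ∈ K ↔ ∀ x ∈ Submodule.span F' {w}, φ.baseChange F' x ∈ Submodule.span F' {w} :=
    fun φ => Set.ext_iff.1 hK φ
  have hinj := coeffMap_injective w hspan
  set L : Submodule F F' := LinearMap.range (coeffMap (F := F) w) with hLdef
  have hLn : Module.finrank F L = n := by
    rw [hLdef, LinearMap.finrank_range_of_inj hinj, Subspace.dual_finrank_eq, hV]
  have h1L : (1 : F') ∈ L := ⟨f₀, h₀⟩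
  have hLM : L ≤ Subalgebra.toSubmodule M.toSubalgebra := by
    rintro _ ⟨f, rfl⟩
    exact coeff_mem_of_isDefinedOver w M hdef f₀ h₀ f
  -- The eigenvalue of `φ` is read off by contracting `φ w = c w` with `f₀`, as `⟨f₀, w⟩ = 1`.
  let χ : K →ₗ[F] F' :=
    coeffMap w ∘ₗ LinearMap.compRight F f₀ ∘ₗ K.val.toLinearMap
  have hχ : ∀ φ : K, χ φ = contract F' (f₀ ∘ₗ (φ : Module.End F V)) w := fun φ => rfl
  have hχ_of : ∀ (φ : K) (c : F'), (φ : Module.End F V).baseChange F' w = c • w → χ φ = c := by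
    intro φ c h
    rw [hχ, ← contract_baseChange, h, map_smul, h₀, smul_eq_mul, mul_one]
  have heig : ∀ φ : K, (φ : Module.End F V).baseChange F' w = χ φ • w := by
    intro φ
    obtain ⟨c, hc⟩ := Submodule.mem_span_singleton.1
      ((hK' φ).1 φ.2 w (Submodule.mem_span_singleton_self w))
    rw [hχ_of φ c hc.symm, hc]
  have hspanW : ∀ (φ : Module.End F V) (c : F'), φ.baseChange F' w = c • w →
      ∀ x ∈ Submodule.span F' {w}, φ.baseChange F' x = c • x := by
    intro φ c h x hx
    obtain ⟨t, rfl⟩ := Submodule.mem_span_singleton.1 hx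
    rw [map_smul, h, smul_comm]
  have hmem : ∀ (φ : Module.End F V) (c : F'), φ.baseChange F' w = c • w → φ ∈ K := by
    intro φ c h
    refine (hK' φ).2 fun x hx => ?_
    rw [hspanW φ c h x hx]
    exact Submodule.smul_mem _ c hx
  have hχinj : Function.Injective χ := by
    intro φ ψ h
    have key : ∀ f : Module.Dual F V, f ∘ₗ (φ : Module.End F V) = f ∘ₗ (ψ : Module.End F V) := by
      intro f
      apply hinj
      rw [coeffMap_apply, coeffMap_apply, ← contract_baseChange, ← contract_baseChange,
        heig, heig, h]
    refine Subtype.ext (LinearMap.ext fun v => ?_)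
    rw [← sub_eq_zero, ← Module.forall_dual_apply_eq_zero_iff F]
    intro f
    rw [map_sub, sub_eq_zero]
    exact LinearMap.congr_fun (key f) v
  set A : Submodule F F' := LinearMap.range χ with hAdef
  have hKA : Module.finrank F K = Module.finrank F A :=
    (LinearMap.finrank_range_of_inj hχinj).symm
  have hAL : A ≤ L := by
    rintro _ ⟨φ, rfl⟩
    exact ⟨f₀ ∘ₗ (φ : Module.End F V), rfl⟩
  have hAmul : ∀ c ∈ A, ∀ a ∈ L, c * a ∈ L := by
    rintro _ ⟨φ, rfl⟩ _ ⟨f, rfl⟩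
    refine ⟨f ∘ₗ (φ : Module.End F V), ?_⟩
    rw [coeffMap_apply, ← contract_baseChange, heig, map_smul, smul_eq_mul, coeffMap_apply]
  have hmulA : ∀ c, (∀ a ∈ L, c * a ∈ L) → c ∈ A := by
    intro c hc
    obtain ⟨φ, hφ⟩ := exists_end_of_mul_mem w c hc
    exact ⟨⟨φ, hmem φ c hφ⟩, hχ_of ⟨φ, hmem φ c hφ⟩ c hφ⟩
  have hAL_iff : Module.finrank F K = n ↔ L ≤ A := by
    rw [hKA, ← hLn]
    refine ⟨fun h => (Submodule.eq_of_le_of_finrank_eq hAL h).ge, fun h => ?_⟩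
    rw [le_antisymm hAL h]
  have hLM_iff : Module.finrank F M = n ↔ Subalgebra.toSubmodule M.toSubalgebra ≤ L := by
    rw [← hLn]
    constructor
    · intro h
      have : Nontrivial L := ⟨⟨1, h1L⟩, 0, fun h => one_ne_zero (congrArg Subtype.val h)⟩
      -- `finrank` is `0` for an infinite extension, which `dim L > 0` excludes.
      have hfin : FiniteDimensional F M :=
        Module.finite_of_finrank_pos (h ▸ Module.finrank_pos)
      have : FiniteDimensional F (Subalgebra.toSubmodule M.toSubalgebra) := hfin
      exact (Submodule.eq_of_le_of_finrank_eq hLM h.symm).ge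
    · intro h
      rw [le_antisymm hLM h]
      rfl
  have hAM : L ≤ A ↔ Subalgebra.toSubmodule M.toSubalgebra ≤ L := by
    constructor
    · intro h
      obtain ⟨E, hE⟩ := exists_intermediateField_eq L h1L fun x hx y hy => hAmul x (h hx) y hy
      have hME : M ≤ E :=
        hmin E (isDefinedOver_of_coeff_mem w E fun f => (hE _).2 ⟨f, rfl⟩)
      exact fun x hx => (hE x).1 (hME hx)
    · intro h c hc
      exact hmulA c fun a ha => h (M.mul_mem (hLM hc) (hLM ha))
  refine ⟨hAL_iff.trans (hAM.trans hLM_iff.symm), hAL_iff.trans ⟨fun h => ⟨?_, ?_, ?_⟩, ?_⟩⟩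
  · intro φ hφ
    exact ⟨χ ⟨φ, hφ⟩, hLM (hAL ⟨_, rfl⟩), hspanW φ _ (heig ⟨φ, hφ⟩)⟩
  · intro c hc
    obtain ⟨φ, rfl⟩ := h (hAM.1 h hc)
    exact ⟨φ, φ.2, hspanW φ _ (heig φ)⟩
  · intro φ hφ ψ hψ c h1 h2
    have hw := Submodule.mem_span_singleton_self (R := F') w
    have : χ ⟨φ, hφ⟩ = χ ⟨ψ, hψ⟩ :=
      (hχ_of ⟨φ, hφ⟩ c (h1 w hw)).trans (hχ_of ⟨ψ, hψ⟩ c (h2 w hw)).symm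
    exact congrArg Subtype.val (hχinj this)
  · rintro ⟨-, hsurj, -⟩ c hc
    obtain ⟨φ, hφ, h⟩ := hsurj c (hLM hc)
    exact ⟨⟨φ, hφ⟩, hχ_of ⟨φ, hφ⟩ c (h w (Submodule.mem_span_singleton_self w))⟩
end
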